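/- arXiv:1808.04917 — 2 statements merged into one kernel-verified Lean document; each statement's English description precedes it below -/
import Mathlib

section
/- For every integer i, the element γ_i lies in the ideal A₁ generated by (ε₀ − 1)(ε₁ − 1); that is, γ_i is divisible in Λ by both ε₀ − 1 and ε₁ − 1 and belongs to ⟨(ε₀ − 1)(ε₁ − 1)⟩. -/
noncomputable section

/-- The group `μₙ × μₙ`, realized as `Multiplicative (ZMod n) × Multiplicative (ZMod n)`. -/
abbrev MuMu (n : ℕ) : Type := Multiplicative (ZMod n) × Multiplicative (ZMod n)

/-- The group ring `Λ = ℤ[μₙ × μₙ]`. -/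
abbrev Lam (n : ℕ) : Type := MonoidAlgebra ℤ (MuMu n)

/-- The first standard generator of `μₙ × μₙ`. -/
def g0 (n : ℕ) : MuMu n := (Multiplicative.ofAdd 1, 1)

/-- The second standard generator of `μₙ × μₙ`. -/
def g1 (n : ℕ) : MuMu n := (1, Multiplicative.ofAdd 1)

/-- `ε₀`, the first standard generator viewed in `Λ`. -/
def eps0 (n : ℕ) : Lam n := MonoidAlgebra.of ℤ (MuMu n) (g0 n)

/-- `ε₁`, the second standard generator viewed in `Λ`. -/
def eps1 (n : ℕ) : Lam n := MonoidAlgebra.of ℤ (MuMu n) (g1 n)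

/-- The ideal `A₁ = ⟨(ε₀ − 1)(ε₁ − 1)⟩ ⊆ Λ`. -/
def A1 (n : ℕ) : Ideal (Lam n) := Ideal.span {(eps0 n - 1) * (eps1 n - 1)}

/-- `N = ∑_{k=0}^{n-1} ε₀^k ε₁^k ∈ Λ`. -/
def Nel (n : ℕ) : Lam n := ∑ k ∈ Finset.range n, eps0 n ^ k * eps1 n ^ k

/-- `γ_i = ε₀^{-i} (1 - ε₁) N ∈ Λ`, for `i : ℤ` (the power `ε₀^{-i}` being the power of
the corresponding group element). -/
def gam (n : ℕ) (i : ℤ) : Lam n :=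
  MonoidAlgebra.of ℤ (MuMu n) (g0 n ^ (-i)) * ((1 - eps1 n) * Nel n)

/-- The `ℤ`-submodule `S ⊆ Λ` spanned by `{γ_i : 0 ≤ i ≤ n−1}`. -/
def Sgam (n : ℕ) : Submodule ℤ (Lam n) :=
  Submodule.span ℤ {x : Lam n | ∃ i : ℕ, i < n ∧ x = gam n i}

/-- `ε₁^n = 1`. -/
theorem eps1_pow_n (n : ℕ) : eps1 n ^ n = 1 := by
  have h : g1 n ^ n = 1 := by
    unfold g1
    rw [Prod.pow_mk, one_pow, ← ofAdd_nsmul]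
    simp
  unfold eps1
  rw [← map_pow, h, map_one]

/-- `(ε₀ - 1)(ε₁ - 1)` divides `(1 - ε₁) N`. -/
theorem dvd_aux (n : ℕ) : (eps0 n - 1) * (eps1 n - 1) ∣ (1 - eps1 n) * Nel n := by
  have h1 : (∑ k ∈ Finset.range n, eps1 n ^ k) * (eps1 n - 1) = 0 := by
    rw [geom_sum_mul, eps1_pow_n, sub_self]
  have h2 : eps0 n - 1 ∣ Nel n - ∑ k ∈ Finset.range n, eps1 n ^ k := by
    unfold Nel
    rw [← Finset.sum_sub_distrib]
    refine Finset.dvd_sum fun k _ => ?_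
    have h3 : eps0 n ^ k * eps1 n ^ k - eps1 n ^ k = (eps0 n ^ k - 1) * eps1 n ^ k := by ring
    rw [h3]
    exact Dvd.dvd.mul_right (by simpa using sub_dvd_pow_sub_pow (eps0 n) 1 k) _
  obtain ⟨f, hf⟩ := h2
  refine ⟨-f, ?_⟩
  linear_combination (1 - eps1 n) * hf - h1

/-- for every integer `i`, the element `γ_i` is divisible in `Λ` by both
`ε₀ − 1` and `ε₁ − 1`, and it lies in the ideal `A₁ = ⟨(ε₀ − 1)(ε₁ − 1)⟩`. -/
theorem stmt_6 (n : ℕ) (hn : 3 ≤ n) (i : ℤ) :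
    (eps0 n - 1 ∣ gam n i) ∧ (eps1 n - 1 ∣ gam n i) ∧ gam n i ∈ A1 n := by
  have h : (eps0 n - 1) * (eps1 n - 1) ∣ gam n i := Dvd.dvd.mul_left (dvd_aux n) _
  exact ⟨dvd_of_mul_right_dvd h, dvd_of_mul_left_dvd h, Ideal.mem_span_singleton.2 h⟩
end
end

section
/- The quotient ℤ-module A₁/S is a free ℤ-module of rank (n−1)(n−2). -/
noncomputable section

/-- `A₁` regarded as a `ℤ`-submodule of `Λ`. -/
abbrev A1Z (n : ℕ) : Submodule ℤ (Lam n) := (A1 n).restrictScalars ℤ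

/-- `S` regarded as a `ℤ`-submodule of `A₁` (note `S ⊆ A₁`). -/
abbrev SgamInA1 (n : ℕ) : Submodule ℤ (A1Z n) := (Sgam n).comap (A1Z n).subtype

/-- Monomials. -/
def ee (n : ℕ) (a b : ZMod n) : Lam n :=
  MonoidAlgebra.single ((Multiplicative.ofAdd a, Multiplicative.ofAdd b) : MuMu n) (1 : ℤ)

/-- Coefficients. -/
def cf (n : ℕ) (a b : ZMod n) : Lam n →ₗ[ℤ] ℤ where
  toFun f := f.coeff ((Multiplicative.ofAdd a, Multiplicative.ofAdd b) : MuMu n)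
  map_add' _ _ := rfl
  map_smul' _ _ := rfl

lemma cf_apply (n : ℕ) (a b : ZMod n) (f : Lam n) :
    cf n a b f = f.coeff ((Multiplicative.ofAdd a, Multiplicative.ofAdd b) : MuMu n) := rfl

lemma ee_mul (n : ℕ) (a b c d : ZMod n) : ee n a b * ee n c d = ee n (a + c) (b + d) := by
  simp [ee, MonoidAlgebra.single_mul_single]

lemma one_eq_ee (n : ℕ) : (1 : Lam n) = ee n 0 0 := by
  simp [ee, MonoidAlgebra.one_def]; rfl

lemma eps0_eq (n : ℕ) : eps0 n = ee n 1 0 := rfl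

lemma eps1_eq (n : ℕ) : eps1 n = ee n 0 1 := rfl

lemma ee_pow (n : ℕ) (a b : ZMod n) (k : ℕ) : ee n a b ^ k = ee n (k * a) (k * b) := by
  induction k with
  | zero => simp [one_eq_ee]
  | succ k ih => rw [pow_succ, ih, ee_mul]; push_cast; congr 1 <;> ring

lemma of_g0_zpow (n : ℕ) (i : ℤ) :
    MonoidAlgebra.of ℤ (MuMu n) (g0 n ^ i) = ee n i 0 := by
  have : g0 n ^ i = ((Multiplicative.ofAdd (i : ZMod n), Multiplicative.ofAdd 0) : MuMu n) := by
    ext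
    · simp [g0, ← ofAdd_zsmul]
    · simp [g0]
  rw [this]; rfl

lemma cf_mul_ee (n : ℕ) (f : Lam n) (a b c d : ZMod n) :
    cf n a b (f * ee n c d) = cf n (a - c) (b - d) f := by
  rw [cf_apply, cf_apply, ee, MonoidAlgebra.coeff_mul_single_apply, mul_one]
  congr 1
  ext
  · simp [sub_eq_add_neg]
  · simp [sub_eq_add_neg]

lemma cf_ee (n : ℕ) (a b c d : ZMod n) :
    cf n a b (ee n c d) = if a = c ∧ b = d then 1 else 0 := by
  rw [cf_apply, ee, MonoidAlgebra.coeff_single, Finsupp.single_apply]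
  congr 1
  simp [Prod.ext_iff, eq_comm]

lemma lam_ext (n : ℕ) (f g : Lam n) (h : ∀ a b, cf n a b f = cf n a b g) : f = g := by
  apply MonoidAlgebra.coeff_injective
  ext ⟨x, y⟩
  exact h x.toAdd y.toAdd

section Aux

variable (n : ℕ) [NeZero n]

lemma lam_eq_sum (f : Lam n) : f = ∑ a, ∑ b, cf n a b f • ee n a b := by
  apply lam_ext
  intro a b
  simp only [map_sum, map_smul, cf_ee]
  rw [Finset.sum_eq_single a, Finset.sum_eq_single b]
  · simp
  · intro c _ hc; simp [hc.symm]
  · simp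
  · intro c _ hc; simp [hc.symm]
  · simp

lemma Nel_eq : Nel n = ∑ a : ZMod n, ee n a a := by
  unfold Nel
  refine Finset.sum_bij' (fun k _ => (k : ZMod n)) (fun a _ => a.val) ?_ ?_ ?_ ?_ ?_
  · simp
  · intro a _; simpa using ZMod.val_lt a
  · intro k hk; exact ZMod.val_cast_of_lt (by simpa using hk)
  · intro a _; simp
  · intro k _; simp [eps0_eq, eps1_eq, ee_pow, ee_mul]

lemma Nel_mul (c : ZMod n) : Nel n * ee n c c = Nel n := by
  rw [Nel_eq, Finset.sum_mul]
  simp only [ee_mul]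
  exact Fintype.sum_equiv (Equiv.addRight c) _ _ (fun _ => rfl)

lemma Sgam_mul (f : Lam n) (hf : f ∈ Sgam n) (c : ZMod n) : f * ee n c c = f := by
  induction hf using Submodule.span_induction with
  | mem x hx =>
    obtain ⟨i, _, rfl⟩ := hx
    rw [gam, mul_assoc, mul_assoc, Nel_mul]
  | zero => simp
  | add x y _ _ hx hy => rw [add_mul, hx, hy]
  | smul a x _ hx => rw [smul_mul_assoc, hx]

lemma Sgam_inv (f : Lam n) (hf : f ∈ Sgam n) (a b : ZMod n) :
    cf n a b f = cf n 0 (b - a) f := by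
  conv_lhs => rw [← Sgam_mul n f hf a]
  rw [cf_mul_ee, sub_self]

lemma cf_A1 (x : Lam n) (a b : ZMod n) :
    cf n a b (x * ((eps0 n - 1) * (eps1 n - 1))) =
      cf n (a - 1) (b - 1) x - cf n (a - 1) b x - cf n a (b - 1) x + cf n a b x := by
  have : x * ((eps0 n - 1) * (eps1 n - 1)) =
      x * ee n 1 1 - x * ee n 1 0 - x * ee n 0 1 + x := by
    rw [eps0_eq, eps1_eq]
    have : ee n 1 1 = ee n 1 0 * ee n 0 1 := by simp [ee_mul]
    rw [this]; ring
  rw [this]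
  simp [cf_mul_ee]

lemma A1_row (f : Lam n) (hf : f ∈ A1 n) (a : ZMod n) : ∑ b, cf n a b f = 0 := by
  obtain ⟨x, rfl⟩ := Ideal.mem_span_singleton'.1 hf
  simp only [cf_A1, Finset.sum_add_distrib, Finset.sum_sub_distrib]
  have h (a : ZMod n) : ∑ b, cf n a (b - 1) x = ∑ b, cf n a b x :=
    Fintype.sum_equiv (Equiv.subRight 1) _ _ (fun _ => rfl)
  rw [h, h]; ring

lemma A1_col (f : Lam n) (hf : f ∈ A1 n) (b : ZMod n) : ∑ a, cf n a b f = 0 := by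
  obtain ⟨x, rfl⟩ := Ideal.mem_span_singleton'.1 hf
  simp only [cf_A1, Finset.sum_add_distrib, Finset.sum_sub_distrib]
  have h (b : ZMod n) : ∑ a, cf n (a - 1) b x = ∑ a, cf n a b x :=
    Fintype.sum_equiv (Equiv.subRight 1) _ _ (fun _ => rfl)
  rw [h, h]; ring

lemma dvd0 (a : ZMod n) : eps0 n - 1 ∣ ee n a 0 - 1 := by
  have : ee n a 0 = eps0 n ^ a.val := by simp [eps0_eq, ee_pow]
  rw [this]; exact sub_one_dvd_pow_sub_one _ _

lemma dvd1 (a : ZMod n) : eps1 n - 1 ∣ ee n 0 a - 1 := by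
  have : ee n 0 a = eps1 n ^ a.val := by simp [eps1_eq, ee_pow]
  rw [this]; exact sub_one_dvd_pow_sub_one _ _

/-- The test elements of `A₁`. -/
def EE (a b : ZMod n) : Lam n := (ee n a 0 - ee n (-1) 0) * (ee n 0 b - ee n 0 (-1))

lemma EE_mem (a b : ZMod n) : EE n a b ∈ A1Z n := by
  change EE n a b ∈ A1 n
  rw [A1, Ideal.mem_span_singleton]
  refine mul_dvd_mul ?_ ?_
  · simpa using dvd_sub (dvd0 n a) (dvd0 n (-1))
  · simpa using dvd_sub (dvd1 n b) (dvd1 n (-1))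

lemma cf_EE (a b c d : ZMod n) (ha : a ≠ -1) (hb : b ≠ -1) :
    cf n a b (EE n c d) = if a = c ∧ b = d then 1 else 0 := by
  have : EE n c d = ee n c d - ee n (-1) d - ee n c (-1) + ee n (-1) (-1) := by
    simp only [EE, sub_mul, mul_sub, ee_mul]
    simp; ring
  rw [this]
  simp [cf_ee, ha, hb]

/-- Row index set. -/
abbrev RI : Type := {a : ZMod n // a ≠ 0 ∧ a ≠ -1}

/-- Column index set. -/
abbrev CI : Type := {b : ZMod n // b ≠ -1}

/-- The classifying map. -/
def Phi : A1Z n →ₗ[ℤ] (RI n × CI n → ℤ) :=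
  (LinearMap.pi fun p : RI n × CI n =>
    cf n p.1.1 p.2.1 - cf n 0 (p.2.1 - p.1.1)) ∘ₗ (A1Z n).subtype

lemma Phi_apply (f : A1Z n) (p : RI n × CI n) :
    Phi n f p = cf n p.1.1 p.2.1 f.1 - cf n 0 (p.2.1 - p.1.1) f.1 := rfl

lemma cf_EE_zero (c d b : ZMod n) (hc : c ≠ 0) (hn : 2 ≤ n) :
    cf n 0 b (EE n c d) = 0 := by
  have : Fact (1 < n) := ⟨by omega⟩
  have h1 : (-1 : ZMod n) ≠ 0 := by simp
  have : EE n c d = ee n c d - ee n (-1) d - ee n c (-1) + ee n (-1) (-1) := by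
    simp only [EE, sub_mul, mul_sub, ee_mul]
    simp; ring
  rw [this]
  simp [cf_ee, hc.symm, h1.symm]

lemma Phi_surj (hn : 2 ≤ n) : Function.Surjective (Phi n) := by
  intro h
  refine ⟨∑ p : RI n × CI n, h p • ⟨EE n p.1.1 p.2.1, EE_mem n _ _⟩, ?_⟩
  ext q
  rw [Phi_apply]
  simp only [AddSubmonoidClass.coe_finsetSum, Submodule.coe_smul, map_sum, map_smul]
  rw [Finset.sum_eq_single q, Finset.sum_eq_zero]
  · rw [cf_EE n _ _ _ _ q.1.2.2 q.2.2]; simp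
  · intro p _; rw [cf_EE_zero n _ _ _ p.1.2.1 hn]; simp
  · intro p _ hp
    rw [cf_EE n _ _ _ _ q.1.2.2 q.2.2, if_neg]
    · simp
    · rintro ⟨h1, h2⟩
      exact hp (Prod.ext (Subtype.ext h1.symm) (Subtype.ext h2.symm))
  · simp

lemma ker_inv (f : Lam n) (hf : f ∈ A1 n)
    (h : ∀ a b : ZMod n, a ≠ 0 → a ≠ -1 → b ≠ -1 → cf n a b f = cf n 0 (b - a) f)
    (a b : ZMod n) : cf n a b f = cf n 0 (b - a) f := by
  have hs (a : ZMod n) : ∑ b, cf n 0 (b - a) f = 0 := by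
    rw [← A1_row n f hf 0]
    exact Fintype.sum_equiv (Equiv.subRight a) _ _ (fun _ => rfl)
  have hs' (b : ZMod n) : ∑ a, cf n 0 (b - a) f = 0 := by
    rw [← A1_row n f hf 0]
    exact Fintype.sum_equiv (Equiv.subLeft b) _ _ (fun _ => rfl)
  have key (u v : ZMod n → ℤ) (hu : ∑ x, u x = 0) (hv : ∑ x, v x = 0)
      (huv : ∀ x, x ≠ -1 → u x = v x) (x : ZMod n) : u x = v x := by
    by_cases hx : x = -1
    · subst hx
      rw [← Finset.add_sum_erase _ _ (Finset.mem_univ (-1 : ZMod n))] at hu hv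
      rw [Finset.sum_congr rfl (fun x hx => huv x (Finset.ne_of_mem_erase hx))] at hu
      linarith
    · exact huv x hx
  refine key (fun a => cf n a b f) (fun a => cf n 0 (b - a) f) (A1_col n f hf b) (hs' b) ?_ a
  intro a ha
  by_cases ha0 : a = 0
  · simp [ha0]
  · exact key (fun b => cf n a b f) (fun b => cf n 0 (b - a) f) (A1_row n f hf a) (hs a)
      (fun b hb => h a b ha0 ha hb) b

lemma gam_eq (j : ℕ) : gam n j = (ee n 0 j - ee n 0 (j + 1)) * Nel n := by
  rw [gam, of_g0_zpow]
  have h : Nel n = ee n j j * Nel n := by rw [mul_comm, Nel_mul]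
  conv_lhs => rw [h]
  rw [one_eq_ee, eps1_eq]
  rw [← mul_assoc, ← mul_assoc]
  congr 1
  simp [sub_mul, mul_sub, ee_mul, add_comm]

lemma tele (k : ℕ) (hk : k ≤ n) : (ee n 0 k - 1) * Nel n ∈ Sgam n := by
  induction k with
  | zero => simp [one_eq_ee]
  | succ k ih =>
    have h1 := ih (by omega)
    have h2 : gam n k ∈ Sgam n := Submodule.subset_span ⟨k, by omega, rfl⟩
    rw [gam_eq] at h2
    have := Submodule.sub_mem _ h1 h2
    convert this using 1
    push_cast
    ring

lemma inv_mem (f : Lam n) (hf : f ∈ A1 n)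
    (h : ∀ a b : ZMod n, cf n a b f = cf n 0 (b - a) f) : f ∈ Sgam n := by
  have h1 : f = ∑ c, cf n 0 c f • ((ee n 0 c - 1) * Nel n) := by
    have e1 : ∑ c, cf n 0 c f • ((ee n 0 c - 1) * Nel n)
        = ∑ c, cf n 0 c f • (ee n 0 c * Nel n) := by
      simp only [sub_mul, smul_sub, Finset.sum_sub_distrib, one_mul]
      rw [← Finset.sum_smul, A1_row n f hf 0]; simp
    rw [e1]
    conv_lhs => rw [lam_eq_sum n f]
    simp only [Nel_eq, Finset.mul_sum, Finset.smul_sum, ee_mul, zero_add]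
    rw [Finset.sum_comm' (t' := Finset.univ) (s' := fun _ => Finset.univ) (by simp)
      (s := Finset.univ (α := ZMod n)) (f := fun c a => cf n 0 c f • ee n a (c + a))]
    refine Finset.sum_congr rfl fun a _ => ?_
    refine Fintype.sum_equiv (Equiv.subRight a) _ _ (fun b => ?_)
    simp [h a b]
  rw [h1]
  refine Submodule.sum_mem _ fun c _ => Submodule.smul_mem _ _ ?_
  have := tele n c.val (ZMod.val_lt c).le
  simpa using this

lemma ker_Phi : LinearMap.ker (Phi n) = SgamInA1 n := by
  ext f
  rw [LinearMap.mem_ker, Submodule.mem_comap]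
  constructor
  · intro h
    refine inv_mem n f.1 f.2 (ker_inv n f.1 f.2 ?_)
    intro a b h1 h2 h3
    have := congrFun h (⟨a, h1, h2⟩, ⟨b, h3⟩)
    rw [Phi_apply] at this
    simpa [sub_eq_zero] using this
  · intro h
    ext p
    rw [Phi_apply, Sgam_inv n f.1 h p.1.1, sub_self]; rfl

lemma card_idx (hn : 2 ≤ n) : Fintype.card (RI n × CI n) = (n - 1) * (n - 2) := by
  have : Fact (1 < n) := ⟨by omega⟩
  have h1 : (0 : ZMod n) ≠ -1 := by simp
  rw [Fintype.card_prod, mul_comm]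
  congr 1
  · rw [Fintype.card_subtype_compl, ZMod.card]; simp
  · rw [Fintype.card_subtype]
    have : (Finset.univ.filter fun a : ZMod n => a ≠ 0 ∧ a ≠ -1) = {0, -1}ᶜ := by
      ext a; simp
    rw [this, Finset.card_compl, ZMod.card, Finset.card_pair h1]

end Aux

/-- the quotient `A₁/S` is a free `ℤ`-module of rank `(n−1)(n−2)`. -/
theorem stmt_11 (n : ℕ) (hn : 3 ≤ n) :
    Module.Free ℤ (A1Z n ⧸ SgamInA1 n) ∧
      Module.finrank ℤ (A1Z n ⧸ SgamInA1 n) = (n - 1) * (n - 2) := by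
  have : NeZero n := ⟨by omega⟩
  have e : (A1Z n ⧸ SgamInA1 n) ≃ₗ[ℤ] (RI n × CI n → ℤ) :=
    (Submodule.quotEquivOfEq _ _ (ker_Phi n).symm).trans
      ((Phi n).quotKerEquivOfSurjective (Phi_surj n (by omega)))
  refine ⟨Module.Free.of_equiv e.symm, ?_⟩
  rw [e.finrank_eq, Module.finrank_fintype_fun_eq_card, card_idx n (by omega)]
end
end
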